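/- Let u ≤ w in S_n and let I and I' be maximal ascents in E_w(u)^+. Then (I,I') = ∅ or (I',I) = ∅. -/

import Mathlib

open Equiv

/-- The length (number of inversions) of a permutation of `Fin n`. -/
def invLen {n : ℕ} (u : Equiv.Perm (Fin n)) : ℕ :=
  (Finset.univ.filter (fun p : Fin n × Fin n => p.1 < p.2 ∧ u p.2 < u p.1)).card

/-- A permutation is a transposition if it swaps two distinct elements. -/
def IsTransposition {n : ℕ} (σ : Equiv.Perm (Fin n)) : Prop :=
  ∃ a b : Fin n, a ≠ b ∧ σ = Equiv.swap a b

/-- Bruhat order on permutations: `v ≤ w` iff `w` is obtained from `v` by left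
multiplication by transpositions, each strictly increasing the length. -/
def BruhatLE {n : ℕ} (v w : Equiv.Perm (Fin n)) : Prop :=
  ∃ (m : ℕ) (c : ℕ → Equiv.Perm (Fin n)),
    c 0 = v ∧ c m = w ∧
    ∀ k, k < m →
      (∃ τ : Equiv.Perm (Fin n), IsTransposition τ ∧ c (k + 1) = τ * c k) ∧
      invLen (c k) < invLen (c (k + 1))

/-- The edge set `Ẽ_w(u)`. -/
def Etilde {n : ℕ} (w u : Equiv.Perm (Fin n)) : Set (Fin n × Fin n) :=
  { p | ∃ i j : Fin n, i < j ∧ p = (u i, u j) ∧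
      BruhatLE (Equiv.swap (u i) (u j) * u) w ∧
      |(invLen (Equiv.swap (u i) (u j) * u) : ℤ) - (invLen u : ℤ)| = 1 }

/-- The transitive reduction `E_w(u)` of `Ẽ_w(u)`: edges `(a,b)` of `Ẽ_w(u)` such that
there is no directed path from `a` to `b` in `Ẽ_w(u)` using at least two edges. -/
def Ered {n : ℕ} (w u : Equiv.Perm (Fin n)) : Set (Fin n × Fin n) :=
  { p | p ∈ Etilde w u ∧
      ¬ ∃ c : Fin n, (p.1, c) ∈ Etilde w u ∧
        Relation.TransGen (fun a b : Fin n => (a, b) ∈ Etilde w u) c p.2 }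

/-- `E_w(u)^+`: edges `(a,b)` of `E_w(u)` with `a < b`. -/
def Eplus {n : ℕ} (w u : Equiv.Perm (Fin n)) : Set (Fin n × Fin n) :=
  { p ∈ Ered w u | p.1 < p.2 }

/-- `E_w(u)^-`: edges `(a,b)` of `E_w(u)` with `a > b`. -/
def Eminus {n : ℕ} (w u : Equiv.Perm (Fin n)) : Set (Fin n × Fin n) :=
  { p ∈ Ered w u | p.2 < p.1 }

/-- The moment-map image `μ(u) = (u⁻¹(1), …, u⁻¹(n)) ∈ ℝⁿ`
(using values `1, …, n`, i.e. `Fin.val + 1`). -/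
def mu {n : ℕ} (u : Equiv.Perm (Fin n)) : Fin n → ℝ :=
  fun k => ((u⁻¹ k : ℕ) : ℝ) + 1

/-- The standard basis vector `e_a` of `ℝⁿ`. -/
def stdB {n : ℕ} (a : Fin n) : Fin n → ℝ :=
  fun k => if k = a then 1 else 0

/-! For `u ≤ w`, every inversion `i < j`, `u j < u i` yields a directed path from `u i` to `u j` in
`Ẽ_w(u)`: if no point `(k, u k)` lies inside the rectangle spanned by `(i, u i)` and `(j, u j)`, it
is an edge, and otherwise it splits into the inversions `(i, k)` and `(k, j)`. An edge `p → q` of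
`E_w(u)⁺` (named by positions) has no point inside its rectangle, and no path of `Ẽ_w(u)` with two
or more edges leads from `u p` to `u q`.

Let `p → q` and `x → y` be edges of `E_w(u)⁺` with `(p, x)` an inversion, and suppose that none of
`(q, x)`, `(p, y)`, `(q, y)` is one. If `y ≤ q`, then `y = q` or `(y, q)` is an inversion, as `y` is
not inside the rectangle of `p → q`; so `u p ⟶ u x ⟶ u y ⟶ u q` bypasses the edge `p → q`. If
`q < y`, then `q` lies inside the rectangle of `x → y`. Both are impossible, so an inversion
from one ascent to another can be pushed forward until one of the ascents ends, which leaves no room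
further along for an inversion in the opposite direction. -/

section Length

variable {n : ℕ} {u : Perm (Fin n)} {i j : Fin n}

/-- The inversions of `u`, as ordered pairs of positions. The set `(I, I')` of two ascents consists
of those with first entry in `I` and second entry in `I'`. -/
def inversions (u : Perm (Fin n)) : Finset (Fin n × Fin n) :=
  {p | p.1 < p.2 ∧ u p.2 < u p.1}

lemma mem_inversions : (i, j) ∈ inversions u ↔ i < j ∧ u j < u i := by
  simp [inversions]

/-- The positions `k` for which `(k, u k)` lies in the interior of the rectangle with lower left
corner `(i, u i)` and upper right corner `(j, u j)`. They measure how far `u * swap i j` is from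
covering `u` in the Bruhat order. -/
def interiorPoints (u : Perm (Fin n)) (i j : Fin n) : Finset (Fin n) :=
  {k ∈ Finset.Ioo i j | u k ∈ Finset.Ioo (u i) (u j)}

lemma mem_interiorPoints {k : Fin n} :
    k ∈ interiorPoints u i j ↔ (i < k ∧ k < j) ∧ u i < u k ∧ u k < u j := by
  simp [interiorPoints]

/-- The action of `swap i j` on pairs `a < b`, modified to fix the pairs whose order the
transposition reverses. It matches the inversions of `u` with inversions of `u * swap i j`. -/
def orderedSwap (i j : Fin n) (p : Fin n × Fin n) : Fin n × Fin n :=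
  if swap i j p.1 < swap i j p.2 then p.map (swap i j) (swap i j) else p

lemma orderedSwap_fst_lt_snd (i j : Fin n) {p : Fin n × Fin n} (hp : p.1 < p.2) :
    (orderedSwap i j p).1 < (orderedSwap i j p).2 := by
  by_cases h : swap i j p.1 < swap i j p.2 <;> simp [orderedSwap, h, hp]

lemma orderedSwap_orderedSwap (i j : Fin n) {p : Fin n × Fin n} (hp : p.1 < p.2) :
    orderedSwap i j (orderedSwap i j p) = p := by
  by_cases h : swap i j p.1 < swap i j p.2 <;> simp [orderedSwap, h, hp, Prod.map]

lemma eq_or_eq_of_not_swap_lt_swap {a b : Fin n} (hij : i < j) (hab : a < b)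
    (h : ¬ swap i j a < swap i j b) :
    (a = i ∧ b = j) ∨ (a = i ∧ i < b ∧ b < j) ∨ (b = j ∧ i < a ∧ a < j) := by
  grind

/-- The inversions that `u * swap i j` has beyond those of `u`, when `i < j` and `u i < u j`, in the
labelling of pairs by `orderedSwap i j`. -/
def newInversions (u : Perm (Fin n)) (i j : Fin n) : Finset (Fin n × Fin n) :=
  insert (i, j) ({i} ×ˢ interiorPoints u i j ∪ interiorPoints u i j ×ˢ {j})

lemma mem_newInversions {a b : Fin n} :
    (a, b) ∈ newInversions u i j ↔ (a = i ∧ b = j) ∨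
      (a = i ∧ b ∈ interiorPoints u i j) ∨ (b = j ∧ a ∈ interiorPoints u i j) := by
  simp [newInversions, and_comm, eq_comm]

lemma card_newInversions (u : Perm (Fin n)) (i j : Fin n) :
    (newInversions u i j).card = 1 + 2 * (interiorPoints u i j).card := by
  have hnotMem : (i, j) ∉ {i} ×ˢ interiorPoints u i j ∪ interiorPoints u i j ×ˢ {j} := by
    simp [mem_interiorPoints]
  have hdisj : Disjoint ({i} ×ˢ interiorPoints u i j) (interiorPoints u i j ×ˢ {j}) :=
    Finset.disjoint_product.2 (.inl (by simp [mem_interiorPoints]))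
  rw [newInversions, Finset.card_insert_of_notMem hnotMem, Finset.card_union_of_disjoint hdisj]
  simp only [Finset.card_product, Finset.card_singleton]
  ring

lemma disjoint_inversions_newInversions (hu : u i < u j) :
    Disjoint (inversions u) (newInversions u i j) := by
  rw [Finset.disjoint_left]
  rintro ⟨a, b⟩ h
  rw [mem_inversions] at h
  simp only [mem_newInversions, mem_interiorPoints]
  grind

lemma fst_lt_snd_of_mem_inversions_union_newInversions (hij : i < j) {p : Fin n × Fin n}
    (hp : p ∈ inversions u ∪ newInversions u i j) : p.1 < p.2 := by
  obtain ⟨a, b⟩ := p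
  simp only [Finset.mem_union, mem_inversions, mem_newInversions, mem_interiorPoints] at hp
  grind

lemma orderedSwap_mem_inversions_mul_swap (hij : i < j) (hu : u i < u j) {p : Fin n × Fin n}
    (hp : p.1 < p.2) :
    orderedSwap i j p ∈ inversions (u * swap i j) ↔ p ∈ inversions u ∪ newInversions u i j := by
  obtain ⟨a, b⟩ := p
  simp only [Finset.mem_union, mem_newInversions, mem_interiorPoints, mem_inversions]
  have hne {k l : Fin n} (hkl : k < l) : u k ≠ u l := u.injective.ne hkl.ne
  by_cases h : swap i j a < swap i j b
  · simp only [orderedSwap, h, if_true, Prod.map_apply, mem_inversions, Perm.mul_apply,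
      swap_apply_self]
    grind
  · simp only [orderedSwap, h, if_false, mem_inversions, Perm.mul_apply]
    rcases eq_or_eq_of_not_swap_lt_swap hij hp h with ⟨rfl, rfl⟩ | ⟨rfl, hb⟩ | ⟨rfl, ha⟩
    · simp [hij, hu]
    · have : swap a j b = b := swap_apply_of_ne_of_ne hp.ne' hb.2.ne
      grind
    · have : swap i b a = a := swap_apply_of_ne_of_ne ha.1.ne' hp.ne
      grind

theorem invLen_mul_swap (hij : i < j) (hu : u i < u j) :
    invLen (u * swap i j) = invLen u + (1 + 2 * (interiorPoints u i j).card) := by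
  have hlt : ∀ p ∈ inversions u ∪ newInversions u i j, p.1 < p.2 := fun _ =>
    fst_lt_snd_of_mem_inversions_union_newInversions hij
  have hlt' : ∀ p ∈ inversions (u * swap i j), p.1 < p.2 := fun _ hp => (mem_inversions.1 hp).1
  calc invLen (u * swap i j)
    _ = (inversions u ∪ newInversions u i j).card := by
      refine Finset.card_nbij' (orderedSwap i j) (orderedSwap i j) (fun p hp => ?_)
        (fun p hp => (orderedSwap_mem_inversions_mul_swap hij hu (hlt p hp)).2 hp)
        (fun p hp => orderedSwap_orderedSwap i j (hlt' p hp))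
        (fun p hp => orderedSwap_orderedSwap i j (hlt p hp))
      have hp_lt := hlt' p hp
      refine (orderedSwap_mem_inversions_mul_swap hij hu (orderedSwap_fst_lt_snd i j hp_lt)).1 ?_
      rwa [orderedSwap_orderedSwap i j hp_lt]
    _ = invLen u + (1 + 2 * (interiorPoints u i j).card) := by
      rw [Finset.card_union_of_disjoint (disjoint_inversions_newInversions hu),
        card_newInversions]
      rfl

lemma invLen_lt_invLen_mul_swap (hij : i < j) (hu : u i < u j) :
    invLen u < invLen (u * swap i j) := by
  have := invLen_mul_swap hij hu
  omega

end Length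

section Edges

variable {n : ℕ} {w u : Perm (Fin n)} {i j : Fin n}

lemma BruhatLE.of_mul_swap (hij : i < j) (hu : u i < u j) (hle : BruhatLE (u * swap i j) w) :
    BruhatLE u w := by
  obtain ⟨m, c, hzero, hlast, hstep⟩ := hle
  refine ⟨m + 1, fun k => Nat.casesOn k u c, rfl, hlast, ?_⟩
  rintro (_ | k) hk
  · have hmul : c 0 = swap (u i) (u j) * u := by rw [hzero, mul_swap_eq_swap_mul]
    have hlt : invLen u < invLen (c 0) := hzero ▸ invLen_lt_invLen_mul_swap hij hu
    exact ⟨⟨swap (u i) (u j), ⟨u i, u j, hu.ne, rfl⟩, hmul⟩, hlt⟩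
  · exact hstep k (by omega)

lemma mem_etilde : (u i, u j) ∈ Etilde w u ↔
    i < j ∧ BruhatLE (u * swap i j) w ∧ |(invLen (u * swap i j) : ℤ) - invLen u| = 1 := by
  simp [Etilde, mul_swap_eq_swap_mul, eq_comm, and_assoc]

lemma mem_etilde_iff_of_lt (hij : i < j) (hu : u i < u j) :
    (u i, u j) ∈ Etilde w u ↔ BruhatLE (u * swap i j) w ∧ interiorPoints u i j = ∅ := by
  rw [mem_etilde, invLen_mul_swap hij hu, ← Finset.card_eq_zero, and_iff_right hij]
  refine and_congr_right fun _ => ?_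
  rw [abs_eq one_pos.le]
  omega

lemma mem_etilde_of_mem_inversions (hle : BruhatLE u w) (hinv : (i, j) ∈ inversions u)
    (hempty : ∀ k, (i, k) ∈ inversions u → (k, j) ∉ inversions u) : (u i, u j) ∈ Etilde w u := by
  obtain ⟨hij, hu⟩ := mem_inversions.1 hinv
  obtain ⟨v, rfl⟩ : ∃ v, u = v * swap i j := ⟨u * swap i j, by simp⟩
  have hv : v i < v j := by simpa using hu
  have hinterior : interiorPoints v i j = ∅ := by
    refine Finset.eq_empty_of_forall_notMem fun k hk => ?_
    obtain ⟨⟨hik, hkj⟩, hvik, hvkj⟩ := mem_interiorPoints.1 hk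
    have hk_fixed : swap i j k = k := swap_apply_of_ne_of_ne hik.ne' hkj.ne
    exact hempty k (mem_inversions.2 ⟨hik, by simpa [hk_fixed]⟩)
      (mem_inversions.2 ⟨hkj, by simpa [hk_fixed]⟩)
  have hlen : invLen (v * swap i j) = invLen v + 1 := by
    simpa [hinterior] using invLen_mul_swap hij hv
  have hmul : v * swap i j * swap i j = v := by simp
  rw [mem_etilde, hmul, hlen]
  exact ⟨hij, .of_mul_swap hij hv hle, by simp⟩

/-- The relation that a directed path with at least one edge leads from one vertex (a value of `u`)
to another in `Ẽ_w(u)`. Such paths are what the transitive reduction `E_w(u)` is defined by. -/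
def EtildePath (w u : Perm (Fin n)) : Fin n → Fin n → Prop :=
  Relation.TransGen fun a b => (a, b) ∈ Etilde w u

theorem EtildePath.of_mem_inversions (hle : BruhatLE u w) {i j : Fin n}
    (hinv : (i, j) ∈ inversions u) : EtildePath w u (u i) (u j) := by
  by_cases hempty : ∀ k, (i, k) ∈ inversions u → (k, j) ∉ inversions u
  · exact .single (mem_etilde_of_mem_inversions hle hinv hempty)
  · push Not at hempty
    obtain ⟨k, hik, hkj⟩ := hempty
    have := (mem_inversions.1 hik).1
    have := (mem_inversions.1 hkj).1
    exact (EtildePath.of_mem_inversions hle hik).trans (EtildePath.of_mem_inversions hle hkj)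
termination_by (j : ℕ) - i

/-- The edge relation of `E_w(u)⁺`, transported from values of `u` to positions: the pairs of
consecutive entries of ascents. -/
def AscentStep (w u : Perm (Fin n)) (i j : Fin n) : Prop :=
  (u i, u j) ∈ Eplus w u

namespace AscentStep

lemma apply_lt_apply (h : AscentStep w u i j) : u i < u j := h.2

lemma lt (h : AscentStep w u i j) : i < j := (mem_etilde.1 h.1.1).1

lemma etildePath (h : AscentStep w u i j) : EtildePath w u (u i) (u j) := .single h.1.1

lemma bruhatLE (h : AscentStep w u i j) : BruhatLE u w :=
  .of_mul_swap h.lt h.apply_lt_apply ((mem_etilde_iff_of_lt h.lt h.apply_lt_apply).1 h.1.1).1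

lemma notMem_interiorPoints (h : AscentStep w u i j) (k : Fin n) : k ∉ interiorPoints u i j :=
  Finset.eq_empty_iff_forall_notMem.1 ((mem_etilde_iff_of_lt h.lt h.apply_lt_apply).1 h.1.1).2 k

lemma not_etildePath_of_etildePath (h : AscentStep w u i j) {a : Fin n}
    (hia : EtildePath w u (u i) a) : ¬ EtildePath w u a (u j) := by
  intro haj
  obtain ⟨b, hib, hba⟩ := Relation.TransGen.head'_iff.1 hia
  exact h.1.2 ⟨b, hib, .trans_right hba haj⟩

theorem mem_inversions_advance {p q x y : Fin n} (hpq : AscentStep w u p q)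
    (hxy : AscentStep w u x y) (hpx : (p, x) ∈ inversions u) :
    (q, x) ∈ inversions u ∨ (p, y) ∈ inversions u ∨ (q, y) ∈ inversions u := by
  by_contra! hcon
  obtain ⟨hqx, hpy, hqy⟩ := hcon
  have hpath : EtildePath w u (u p) (u x) := .of_mem_inversions hpq.bruhatLE hpx
  rw [mem_inversions] at hpx hqx hpy hqy
  have apply_lt {k l : Fin n} (hkl : k < l) (hinv : ¬ (k < l ∧ u l < u k)) : u k < u l :=
    (not_lt.1 fun h => hinv ⟨hkl, h⟩).lt_of_ne (u.injective.ne hkl.ne)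
  have huxq : u x < u q := hpx.2.trans hpq.apply_lt_apply
  have hxq : x < q := (not_lt.1 fun h => hqx ⟨h, huxq⟩).lt_of_ne fun h => huxq.ne (h ▸ rfl)
  have hpy_lt : p < y := hpx.1.trans hxy.lt
  have hupy : u p < u y := apply_lt hpy_lt hpy
  rcases lt_trichotomy y q with hyq | rfl | hqy_lt
  · have huqy : u q < u y := by
      refine (not_lt.1 fun h => ?_).lt_of_ne (u.injective.ne hyq.ne')
      exact hpq.notMem_interiorPoints y (mem_interiorPoints.2 ⟨⟨hpy_lt, hyq⟩, hupy, h⟩)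
    have hpath' : EtildePath w u (u y) (u q) :=
      .of_mem_inversions hpq.bruhatLE (mem_inversions.2 ⟨hyq, huqy⟩)
    exact hpq.not_etildePath_of_etildePath hpath (hxy.etildePath.trans hpath')
  · exact hpq.not_etildePath_of_etildePath hpath hxy.etildePath
  · exact hxy.notMem_interiorPoints q
      (mem_interiorPoints.2 ⟨⟨hxq, hqy_lt⟩, huxq, apply_lt hqy_lt hqy⟩)

end AscentStep

end Edges

section Ascents

variable {n : ℕ} {w u : Perm (Fin n)}

lemma le_and_apply_le_of_reflTransGen_ascentStep {i j : Fin n}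
    (h : Relation.ReflTransGen (AscentStep w u) i j) : i ≤ j ∧ u i ≤ u j := by
  induction h with
  | refl => exact ⟨le_rfl, le_rfl⟩
  | tail _ hstep ih => exact ⟨ih.1.trans hstep.lt.le, ih.2.trans hstep.apply_lt_apply.le⟩

theorem notMem_inversions_of_reflTransGen_ascentStep {p q x y : Fin n}
    (hpq : Relation.ReflTransGen (AscentStep w u) p q)
    (hxy : Relation.ReflTransGen (AscentStep w u) x y) (hpx : (p, x) ∈ inversions u) :
    (y, q) ∉ inversions u := by
  induction hpq using Relation.ReflTransGen.head_induction_on generalizing x with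
  | refl =>
    have hlt := (mem_inversions.1 hpx).1.trans_le (le_and_apply_le_of_reflTransGen_ascentStep hxy).1
    exact fun hyq => hlt.asymm (mem_inversions.1 hyq).1
  | head hp hpq ihp =>
    induction hxy using Relation.ReflTransGen.head_induction_on with
    | refl =>
      have hlt := (mem_inversions.1 hpx).2.trans_le
        (le_and_apply_le_of_reflTransGen_ascentStep (hpq.head hp)).2
      exact fun hyq => hlt.asymm (mem_inversions.1 hyq).2
    | head hx hxy ihx =>
      rcases hp.mem_inversions_advance hx hpx with hinv | hinv | hinv
      · exact ihp (hxy.head hx) hinv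
      · exact ihx hinv
      · exact ihp hxy hinv

lemma reflTransGen_ascentStep_of_le {r : ℕ} {I : Fin (r + 1) → Fin n}
    (hI : ∀ k : Fin r, AscentStep w u (I k.castSucc) (I k.succ)) {k l : Fin (r + 1)} (hkl : k ≤ l) :
    Relation.ReflTransGen (AscentStep w u) (I k) (I l) := by
  induction l using Fin.induction with
  | zero => rw [Fin.le_zero_iff.1 hkl]
  | succ l ih =>
    rcases hkl.eq_or_lt with rfl | hlt
    · rfl
    · exact (ih (Fin.le_castSucc_iff.2 hlt)).tail (hI l)

end Ascents

theorem stmt9_general {n : ℕ} (w u : Equiv.Perm (Fin n))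
    (r r' : ℕ) (I : Fin (r + 1) → Fin n) (I' : Fin (r' + 1) → Fin n)
    (hIe : ∀ k : Fin r, ((u (I k.castSucc), u (I k.succ)) : Fin n × Fin n) ∈ Eplus w u)
    (hI'e : ∀ k : Fin r', ((u (I' k.castSucc), u (I' k.succ)) : Fin n × Fin n) ∈ Eplus w u) :
    (¬ ∃ (k : Fin (r + 1)) (k' : Fin (r' + 1)), I k < I' k' ∧ u (I' k') < u (I k)) ∨
    (¬ ∃ (k' : Fin (r' + 1)) (k : Fin (r + 1)), I' k' < I k ∧ u (I k) < u (I' k')) := by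
  by_contra! hcon
  simp only [← mem_inversions] at hcon
  obtain ⟨⟨a, a', ha⟩, b', b, hb⟩ := hcon
  have path {k l} (h : k ≤ l) := reflTransGen_ascentStep_of_le hIe h
  have path' {k l} (h : k ≤ l) := reflTransGen_ascentStep_of_le hI'e h
  rcases le_total a b with hab | hba <;> rcases le_total a' b' with hab' | hba'
  · exact notMem_inversions_of_reflTransGen_ascentStep (path hab) (path' hab') ha hb
  · have hI := (le_and_apply_le_of_reflTransGen_ascentStep (path hab)).2
    have hI' := (le_and_apply_le_of_reflTransGen_ascentStep (path' hba')).2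
    rw [mem_inversions] at ha hb
    order
  · have hI := (le_and_apply_le_of_reflTransGen_ascentStep (path hba)).1
    have hI' := (le_and_apply_le_of_reflTransGen_ascentStep (path' hab')).1
    rw [mem_inversions] at ha hb
    order
  · exact notMem_inversions_of_reflTransGen_ascentStep (path' hba') (path hba) hb ha

theorem stmt9 {n : ℕ} (hn : 1 ≤ n) (w u : Equiv.Perm (Fin n)) (hle : BruhatLE u w)
    (r r' : ℕ) (I : Fin (r + 1) → Fin n) (I' : Fin (r' + 1) → Fin n)
    (hI : StrictMono I) (hI' : StrictMono I')
    (hIe : ∀ k : Fin r, ((u (I k.castSucc), u (I k.succ)) : Fin n × Fin n) ∈ Eplus w u)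
    (hI'e : ∀ k : Fin r', ((u (I' k.castSucc), u (I' k.succ)) : Fin n × Fin n) ∈ Eplus w u)
    (hImax1 : ¬ ∃ i0 : Fin n, i0 < I 0 ∧ ((u i0, u (I 0)) : Fin n × Fin n) ∈ Eplus w u)
    (hImax2 : ¬ ∃ i1 : Fin n, I (Fin.last r) < i1 ∧
      ((u (I (Fin.last r)), u i1) : Fin n × Fin n) ∈ Eplus w u)
    (hI'max1 : ¬ ∃ i0 : Fin n, i0 < I' 0 ∧ ((u i0, u (I' 0)) : Fin n × Fin n) ∈ Eplus w u)
    (hI'max2 : ¬ ∃ i1 : Fin n, I' (Fin.last r') < i1 ∧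
      ((u (I' (Fin.last r')), u i1) : Fin n × Fin n) ∈ Eplus w u) :
    (¬ ∃ (k : Fin (r + 1)) (k' : Fin (r' + 1)), I k < I' k' ∧ u (I' k') < u (I k)) ∨
    (¬ ∃ (k' : Fin (r' + 1)) (k : Fin (r + 1)), I' k' < I k ∧ u (I k) < u (I' k')) :=
  stmt9_general w u r r' I I' hIe hI'e
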